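/- Let m, n ∈ ℕ with n ≥ 2. The operator (−Δ)^m with domain C₀^∞(ℝⁿ∖{0}) is essentially self-adjoint in L²(ℝⁿ; dⁿx) if and only if n ≥ 4m. -/

import Mathlib

open MeasureTheory

noncomputable section

/-- A densely defined operator `T` in a complex Hilbert space is *essentially self-adjoint*
if its adjoint `T*` is self-adjoint (equivalently, its closure is self-adjoint). -/
def EssentiallySelfAdjoint {H : Type*} [NormedAddCommGroup H] [InnerProductSpace ℂ H]
    [CompleteSpace H] (T : H →ₗ.[ℂ] H) : Prop :=
  Dense (T.domain : Set H) ∧ IsSelfAdjoint T.adjoint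

/-- The Laplacian of `f : ℝⁿ → ℂ`. -/
def laplacian {n : ℕ} (f : EuclideanSpace ℝ (Fin n) → ℂ) (x : EuclideanSpace ℝ (Fin n)) : ℂ :=
  ∑ i : Fin n, fderiv ℝ (fun y => fderiv ℝ f y (EuclideanSpace.single i (1:ℝ))) x
    (EuclideanSpace.single i (1:ℝ))

/-- The graph of the operator given by the formal differential expression `L` with domain
`C₀^∞(ℝⁿ \ {0})`, as a subspace of `L²(ℝⁿ) × L²(ℝⁿ)`. -/
def graphOf (n : ℕ) (L : (EuclideanSpace ℝ (Fin n) → ℂ) → (EuclideanSpace ℝ (Fin n) → ℂ)) :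
    Submodule ℂ (Lp ℂ 2 (volume : Measure (EuclideanSpace ℝ (Fin n))) ×
      Lp ℂ 2 (volume : Measure (EuclideanSpace ℝ (Fin n)))) :=
  Submodule.span ℂ {p | ∃ φ : EuclideanSpace ℝ (Fin n) → ℂ,
    ContDiff ℝ (⊤ : ℕ∞) φ ∧ HasCompactSupport φ ∧ (0 : EuclideanSpace ℝ (Fin n)) ∉ tsupport φ ∧
    (p.1 : EuclideanSpace ℝ (Fin n) → ℂ) =ᵐ[volume] φ ∧
    (p.2 : EuclideanSpace ℝ (Fin n) → ℂ) =ᵐ[volume] L φ}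

/-- The operator in `L²(ℝⁿ)` given by the formal differential expression `L` with domain
`C₀^∞(ℝⁿ \ {0})`. -/
def opOn (n : ℕ) (L : (EuclideanSpace ℝ (Fin n) → ℂ) → (EuclideanSpace ℝ (Fin n) → ℂ)) :
    Lp ℂ 2 (volume : Measure (EuclideanSpace ℝ (Fin n))) →ₗ.[ℂ]
      Lp ℂ 2 (volume : Measure (EuclideanSpace ℝ (Fin n))) :=
  (graphOf n L).toLinearPMap

/-- The negative Laplacian `-Δ`. -/
def negLap {n : ℕ} (f : EuclideanSpace ℝ (Fin n) → ℂ) : EuclideanSpace ℝ (Fin n) → ℂ :=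
  fun x => -laplacian f x

/-- The operator `(-Δ)^m` with domain `C₀^∞(ℝⁿ \ {0})` in `L²(ℝⁿ)`. -/
def negLapPowOp (m n : ℕ) :
    Lp ℂ 2 (volume : Measure (EuclideanSpace ℝ (Fin n))) →ₗ.[ℂ]
      Lp ℂ 2 (volume : Measure (EuclideanSpace ℝ (Fin n))) :=
  opOn n (fun φ => negLap^[m] φ)

/-!
Let `A` be a Fourier multiplier of order `k` with a real elliptic symbol `σ`, acting on test
functions supported away from the origin. It is symmetric, and `A* u = f` says that `A u = f`
weakly on `ℝⁿ \ {0}`; essential self-adjointness asks that `⟪f, v⟫ = ⟪u, g⟫` for all weak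
solutions `(u, f)` and `(v, g)`.

If `2k ≤ n`, the origin is removable for weak solutions: cutting a test function `φ` off at scale
`1/t` costs `A (χ(t·) φ)`, which has size `O(tᵏ)` on a ball of volume `O(t⁻ⁿ)` and is thus bounded
in `L²` with shrinking support, so it tends weakly to zero. A weak solution on all of `ℝⁿ`
satisfies `𝓕 f = σ 𝓕 u`, and as `σ` is real Plancherel gives the symmetry.

If `n < 2k`, then `(σ - i)⁻¹` is square integrable, so `(A - i) u = δ₀` has a solution `u ∈ L²`.
Away from the origin this says `A u = i u` weakly, so `u` is a nonzero deficiency vector.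
-/

open Filter FourierTransform SchwartzMap
open scoped Topology

section SymmetricOperators

variable {𝕜 H : Type*} [RCLike 𝕜] [NormedAddCommGroup H] [InnerProductSpace 𝕜 H]
  {T : H →ₗ.[𝕜] H}

theorem isSelfAdjoint_adjoint_iff_isFormalAdjoint [CompleteSpace H]
    (hT : Dense (T.domain : Set H)) (hsymm : T.IsFormalAdjoint T) :
    IsSelfAdjoint T.adjoint ↔ T.adjoint.IsFormalAdjoint T.adjoint := by
  have hle : T ≤ T.adjoint := hsymm.le_adjoint hT
  have hT' : Dense (T.adjoint.domain : Set H) := hT.mono hle.1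
  rw [LinearPMap.isSelfAdjoint_def]
  refine ⟨fun h => ?_, fun h => le_antisymm ?_ (h.le_adjoint hT')⟩
  · simpa only [h] using LinearPMap.adjoint_isFormalAdjoint hT'
  · refine LinearPMap.IsFormalAdjoint.le_adjoint hT fun x y => ?_
    rw [hle.2 (x := x) (y := ⟨x, hle.1 x.2⟩) rfl]
    exact (LinearPMap.adjoint_isFormalAdjoint hT').symm ⟨x, hle.1 x.2⟩ y

theorem isFormalAdjoint_iff_forall_mem_graph {S : H →ₗ.[𝕜] H} :
    S.IsFormalAdjoint T ↔ ∀ u f v g, (u, f) ∈ S.graph → (v, g) ∈ T.graph →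
      inner 𝕜 f v = inner 𝕜 u g := by
  refine ⟨fun h u f v g hu hv => ?_, fun h x y => h _ _ _ _ (S.mem_graph x) (T.mem_graph y)⟩
  obtain ⟨x, rfl, rfl⟩ := S.mem_graph_iff.1 hu
  obtain ⟨y, rfl, rfl⟩ := T.mem_graph_iff.1 hv
  exact h x y

end SymmetricOperators

section EscapingSupport

variable {𝕜 α ι F : Type*} [RCLike 𝕜] [MeasurableSpace α] {μ : Measure α} {l : Filter ι}
  [NormedAddCommGroup F] {s : ι → Set α}

theorem tendsto_setIntegral_of_ae_eventually_notMem [NormedSpace ℝ F] [l.IsCountablyGenerated]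
    (hs : ∀ i, MeasurableSet (s i)) (hs' : ∀ᵐ x ∂μ, ∀ᶠ i in l, x ∉ s i)
    {f : α → F} (hf : Integrable f μ) :
    Tendsto (fun i => ∫ x in s i, f x ∂μ) l (𝓝 0) := by
  simp only [← integral_indicator (hs _)]
  rw [← integral_zero α F (μ := μ)]
  refine tendsto_integral_filter_of_dominated_convergence (fun x => ‖f x‖)
    (.of_forall fun i => hf.aestronglyMeasurable.indicator (hs i))
    (.of_forall fun i => .of_forall fun x => norm_indicator_le_norm_self f x) hf.norm ?_
  filter_upwards [hs'] with x hx
  refine tendsto_const_nhds.congr' ?_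
  filter_upwards [hx] with i hi
  rw [Set.indicator_of_notMem hi]

variable [InnerProductSpace 𝕜 F]

theorem norm_inner_le_sqrt_setIntegral_mul_norm {s : Set α} (hs : MeasurableSet s)
    (u h : Lp F 2 μ) (h0 : ∀ᵐ x ∂μ, x ∉ s → h x = 0) :
    ‖inner 𝕜 u h‖ ≤ √(∫ x in s, ‖u x‖ ^ 2 ∂μ) * ‖h‖ := by
  have hus : MemLp (s.indicator u) 2 μ := (Lp.memLp u).indicator hs
  have hinner : inner 𝕜 u h = inner 𝕜 (hus.toLp _) h := by
    rw [L2.inner_def, L2.inner_def]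
    refine integral_congr_ae ?_
    filter_upwards [h0, hus.coeFn_toLp] with x hx hux
    by_cases hxs : x ∈ s
    · rw [hux, Set.indicator_of_mem hxs]
    · rw [hx hxs, inner_zero_right, inner_zero_right]
  have hnorm : ‖hus.toLp _‖ = √(∫ x in s, ‖u x‖ ^ 2 ∂μ) := by
    rw [Lp.norm_toLp, hus.eLpNorm_eq_integral_rpow_norm two_ne_zero ENNReal.ofNat_ne_top,
      ENNReal.toReal_ofReal (by positivity), Real.sqrt_eq_rpow, ← integral_indicator hs]
    have hsq : ∀ x, ‖s.indicator u x‖ ^ 2 = s.indicator (fun x => ‖u x‖ ^ 2) x := fun x => by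
      by_cases hx : x ∈ s <;> simp [hx]
    simp [hsq]
  rw [hinner, ← hnorm]
  exact norm_inner_le_norm _ _

theorem tendsto_inner_zero_of_ae_eventually_notMem [l.IsCountablyGenerated]
    (hs : ∀ i, MeasurableSet (s i)) (hs' : ∀ᵐ x ∂μ, ∀ᶠ i in l, x ∉ s i)
    {h : ι → Lp F 2 μ} (h0 : ∀ i, ∀ᵐ x ∂μ, x ∉ s i → h i x = 0)
    {M : ℝ} (hM : ∀ᶠ i in l, ‖h i‖ ≤ M) (u : Lp F 2 μ) :
    Tendsto (fun i => inner 𝕜 u (h i)) l (𝓝 0) := by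
  have hmass : Tendsto (fun i => √(∫ x in s i, ‖u x‖ ^ 2 ∂μ) * M) l (𝓝 0) := by
    have hu : Integrable (fun x => ‖u x‖ ^ 2) μ := (Lp.memLp u).integrable_norm_pow two_ne_zero
    simpa using (tendsto_setIntegral_of_ae_eventually_notMem hs hs' hu).sqrt.mul_const M
  refine squeeze_zero_norm' ?_ hmass
  filter_upwards [hM] with i hi
  calc ‖inner 𝕜 u (h i)‖ ≤ √(∫ x in s i, ‖u x‖ ^ 2 ∂μ) * ‖h i‖ :=
        norm_inner_le_sqrt_setIntegral_mul_norm (hs i) u (h i) (h0 i)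
    _ ≤ √(∫ x in s i, ‖u x‖ ^ 2 ∂μ) * M := by gcongr

end EscapingSupport

section WeightedBounds

variable {E F : Type*} [NormedAddCommGroup E] [NormedSpace ℝ E] [FiniteDimensional ℝ E]
  [MeasurableSpace E] [BorelSpace E] {μ : Measure E} [μ.IsAddHaarMeasure] [NormedAddCommGroup F]

theorem memLp_two_inv_one_add_norm_pow {N : ℕ} (hN : Module.finrank ℝ E < 2 * N) :
    MemLp (fun x : E => ((1 + ‖x‖) ^ N)⁻¹) 2 μ := by
  have hcont : Continuous fun x : E => ((1 + ‖x‖) ^ N)⁻¹ :=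
    ((continuous_const.add continuous_norm).pow N).inv₀ fun x =>
      (by positivity : (0 : ℝ) < (1 + ‖x‖) ^ N).ne'
  rw [memLp_two_iff_integrable_sq hcont.aestronglyMeasurable]
  refine (integrable_one_add_norm (r := (2 * N : ℕ)) (by exact_mod_cast hN)).congr
    (.of_forall fun x => ?_)
  simp only
  rw [Real.rpow_neg (by positivity), Real.rpow_natCast, inv_pow, ← pow_mul, mul_comm]

variable [NormedSpace ℝ F]

theorem exists_norm_toLp_two_le_of_weighted_bound :
    ∃ N : ℕ, ∃ W : ℝ, ∀ (C : ℝ) (φ : 𝓢(E, F)), (∀ x, (1 + ‖x‖) ^ N * ‖φ x‖ ≤ C) →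
      ‖φ.toLp 2 μ‖ ≤ C * W := by
  have hw : MemLp (fun x : E => ((1 + ‖x‖) ^ (Module.finrank ℝ E + 1))⁻¹) 2 μ :=
    memLp_two_inv_one_add_norm_pow (by lia)
  refine ⟨Module.finrank ℝ E + 1, ‖hw.toLp _‖, fun C φ hC =>
    Lp.norm_le_mul_norm_of_ae_le_mul ?_⟩
  filter_upwards [φ.coeFn_toLp 2 μ, hw.coeFn_toLp] with x hφ hwx
  rw [hφ, hwx, Real.norm_of_nonneg (by positivity), ← div_eq_mul_inv, le_div_iff₀' (by positivity)]
  exact hC x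

theorem norm_toLp_two_le_of_support_subset {s : Set E} (hs : MeasurableSet s) (hμs : μ s ≠ ⊤)
    {φ : 𝓢(E, F)} {K : ℝ} (hK : ∀ x, ‖φ x‖ ≤ K) (hφ : ∀ x ∉ s, φ x = 0) :
    ‖φ.toLp 2 μ‖ ≤ K * √(μ.real s) := by
  have hK0 : 0 ≤ K := (norm_nonneg _).trans (hK 0)
  calc ‖φ.toLp 2 μ‖ ≤ ‖indicatorConstLp 2 hs hμs K‖ := by
        refine Lp.norm_le_norm_of_ae_le ?_
        filter_upwards [φ.coeFn_toLp 2 μ, indicatorConstLp_coeFn (p := 2) (hs := hs) (hμs := hμs)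
          (c := K)] with x hφx hx
        rw [hφx, hx]
        by_cases hxs : x ∈ s
        · rw [Set.indicator_of_mem hxs, Real.norm_of_nonneg hK0]
          exact hK x
        · rw [hφ x hxs, norm_zero]
          positivity
    _ = K * √(μ.real s) := by
        rw [norm_indicatorConstLp two_ne_zero ENNReal.ofNat_ne_top, Real.norm_of_nonneg hK0,
          Real.sqrt_eq_rpow, ENNReal.toReal_ofNat]

end WeightedBounds

section PureOrder

variable {E F : Type*} [NormedAddCommGroup E] [NormedSpace ℝ E] [NormedAddCommGroup F]
  [NormedSpace ℂ F]

/-- `A` behaves like a homogeneous constant-coefficient differential operator of order `k`: the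
derivatives of `A φ` of order `j` at a point are controlled by those of `φ` of order exactly
`j + k` at the same point. In particular such an operator is local. -/
def HasPureOrder (A : 𝓢(E, F) →L[ℂ] 𝓢(E, F)) (k : ℕ) : Prop :=
  ∃ C : ℝ, 0 ≤ C ∧ ∀ (j : ℕ) (φ : 𝓢(E, F)) (x : E),
    ‖iteratedFDeriv ℝ j (A φ) x‖ ≤ C * ‖iteratedFDeriv ℝ (j + k) φ x‖

variable {A B : 𝓢(E, F) →L[ℂ] 𝓢(E, F)} {k l : ℕ}

theorem hasPureOrder_one : HasPureOrder (1 : 𝓢(E, F) →L[ℂ] 𝓢(E, F)) 0 :=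
  ⟨1, zero_le_one, fun j φ x => by rw [one_mul, add_zero, one_apply_eq_self]⟩

theorem hasPureOrder_lineDerivOpCLM (v : E) :
    HasPureOrder (LineDeriv.lineDerivOpCLM ℂ 𝓢(E, F) v) 1 := by
  refine ⟨‖v‖, norm_nonneg v, fun j φ x => ?_⟩
  have hφ : ContDiff ℝ j (fderiv ℝ φ) := (φ.smooth (j + 1)).fderiv_right le_rfl
  have hcoe : ⇑(LineDeriv.lineDerivOpCLM ℂ 𝓢(E, F) v φ) = fun y => fderiv ℝ φ y v := by
    ext y
    exact (φ.lineDerivOp_apply v y).trans φ.differentiableAt.lineDeriv_eq_fderiv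
  rw [hcoe, ← norm_iteratedFDeriv_fderiv]
  exact norm_iteratedFDeriv_clm_apply_const hφ.contDiffAt le_rfl

namespace HasPureOrder

theorem mul (hA : HasPureOrder A k) (hB : HasPureOrder B l) : HasPureOrder (A * B) (k + l) := by
  obtain ⟨C, hC0, hC⟩ := hA
  obtain ⟨D, hD0, hD⟩ := hB
  refine ⟨C * D, by positivity, fun j φ x => ?_⟩
  calc ‖iteratedFDeriv ℝ j (A (B φ)) x‖ ≤ C * ‖iteratedFDeriv ℝ (j + k) (B φ) x‖ := hC j (B φ) x
    _ ≤ C * (D * ‖iteratedFDeriv ℝ (j + k + l) φ x‖) := by gcongr; exact hD (j + k) φ x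
    _ = C * D * ‖iteratedFDeriv ℝ (j + (k + l)) φ x‖ := by rw [mul_assoc, add_assoc]

theorem pow (hA : HasPureOrder A k) (m : ℕ) : HasPureOrder (A ^ m) (k * m) := by
  induction m with
  | zero => exact hasPureOrder_one
  | succ m ih => exact ih.mul hA

theorem neg (hA : HasPureOrder A k) : HasPureOrder (-A) k := by
  obtain ⟨C, hC0, hC⟩ := hA
  refine ⟨C, hC0, fun j φ x => ?_⟩
  have hcoe : ⇑((-A) φ) = -⇑(A φ) := rfl
  rw [hcoe, iteratedFDeriv_neg_apply, norm_neg]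
  exact hC j φ x

theorem sum {ι : Type*} {s : Finset ι} {A : ι → 𝓢(E, F) →L[ℂ] 𝓢(E, F)}
    (hA : ∀ i ∈ s, HasPureOrder (A i) k) : HasPureOrder (∑ i ∈ s, A i) k := by
  choose! C hC0 hC using hA
  refine ⟨∑ i ∈ s, C i, Finset.sum_nonneg hC0, fun j φ x => ?_⟩
  have hcoe : ⇑((∑ i ∈ s, A i) φ) = fun y => ∑ i ∈ s, A i φ y := by
    ext y
    simp
  rw [hcoe, iteratedFDeriv_fun_sum_apply fun i _ => ((A i φ).smooth j).contDiffAt, Finset.sum_mul]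
  exact (norm_sum_le _ _).trans (Finset.sum_le_sum fun i hi => hC i hi j φ x)

theorem apply_eq_of_eventuallyEq (hA : HasPureOrder A k) {φ ψ : 𝓢(E, F)} {x : E}
    (h : φ =ᶠ[𝓝 x] ψ) : A φ x = A ψ x := by
  obtain ⟨C, -, hC⟩ := hA
  have hzero : ⇑(φ - ψ) =ᶠ[𝓝 x] fun _ => 0 := h.mono fun y hy => by simp [hy]
  have hbound := hC 0 (φ - ψ) x
  rw [(hzero.iteratedFDeriv ℝ (0 + k)).eq_of_nhds, iteratedFDeriv_fun_zero, Pi.zero_apply,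
    norm_zero, mul_zero, norm_iteratedFDeriv_zero, norm_le_zero_iff, map_sub] at hbound
  exact sub_eq_zero.1 hbound

end HasPureOrder

end PureOrder

section Cutoff

variable {E F : Type*} [NormedAddCommGroup E] [NormedSpace ℝ E] [NormedAddCommGroup F]

section

variable [NormedSpace ℝ F]

theorem exists_one_add_norm_pow_mul_iteratedFDeriv_le (φ : 𝓢(E, F)) (N k : ℕ) :
    ∃ C : ℝ, 0 ≤ C ∧ ∀ i ≤ k, ∀ x, (1 + ‖x‖) ^ N * ‖iteratedFDeriv ℝ i φ x‖ ≤ C :=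
  ⟨_, by positivity, fun _ hi x =>
    one_add_le_sup_seminorm_apply (𝕜 := ℝ) (m := (N, k)) le_rfl hi φ x⟩

theorem exists_norm_iteratedFDeriv_comp_const_smul_le (φ : 𝓢(E, F)) (k : ℕ) :
    ∃ C : ℝ, 0 ≤ C ∧ ∀ i ≤ k, ∀ (t : ℝ) (x : E),
      ‖iteratedFDeriv ℝ i (fun y => φ (t • y)) x‖ ≤ C * max 1 |t| ^ k := by
  obtain ⟨C, hC0, hC⟩ := exists_one_add_norm_pow_mul_iteratedFDeriv_le φ 0 k
  refine ⟨C, hC0, fun i hi t x => ?_⟩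
  have ht : |t| ^ i ≤ max 1 |t| ^ k :=
    calc |t| ^ i ≤ max 1 |t| ^ i := by gcongr; exact le_max_right _ _
      _ ≤ max 1 |t| ^ k := pow_le_pow_right₀ (le_max_left _ _) hi
  rw [iteratedFDeriv_comp_const_smul t (φ.smooth i), norm_smul, norm_pow, Real.norm_eq_abs,
    mul_comm C]
  gcongr
  simpa using hC i hi (t • x)

end

variable [NormedSpace ℂ F] [FiniteDimensional ℝ E]

/-- A smooth function which is `1` on the unit ball and vanishes outside the ball of radius `2`. -/
def unitBump (E : Type*) [NormedAddCommGroup E] [NormedSpace ℝ E] [FiniteDimensional ℝ E] :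
    𝓢(E, ℝ) :=
  let b : ContDiffBump (0 : E) := ⟨1, 2, one_pos, one_lt_two⟩
  b.hasCompactSupport.toSchwartzMap b.contDiff

theorem unitBump_eq_one {x : E} (hx : ‖x‖ ≤ 1) : unitBump E x = 1 :=
  ContDiffBump.one_of_mem_closedBall _ (mem_closedBall_zero_iff.2 hx)

theorem unitBump_eq_zero {x : E} (hx : 2 ≤ ‖x‖) : unitBump E x = 0 :=
  ContDiffBump.zero_of_le_dist _ (by rwa [dist_zero_right])

/-- Smooth restriction of a Schwartz function to the ball of radius about `1 / t`: multiplication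
by the bump function dilated by `t`. -/
def cutoff (t : ℝ) (φ : 𝓢(E, F)) : 𝓢(E, F) :=
  smulLeftCLM F (fun x => unitBump E (t • x)) φ

theorem cutoff_apply (t : ℝ) (φ : 𝓢(E, F)) (x : E) :
    cutoff t φ x = unitBump E (t • x) • φ x := by
  have hsmul : (fun x : E => t • x).HasTemperateGrowth := by fun_prop
  exact smulLeftCLM_apply_apply ((unitBump E).hasTemperateGrowth.comp hsmul) φ x

theorem cutoff_apply_of_norm_smul_le_one {t : ℝ} (φ : 𝓢(E, F)) {x : E} (hx : ‖t • x‖ ≤ 1) :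
    cutoff t φ x = φ x := by
  rw [cutoff_apply, unitBump_eq_one hx, one_smul]

theorem cutoff_apply_of_two_le_norm_smul {t : ℝ} (φ : 𝓢(E, F)) {x : E} (hx : 2 ≤ ‖t • x‖) :
    cutoff t φ x = 0 := by
  rw [cutoff_apply, unitBump_eq_zero hx, zero_smul]

theorem exists_norm_iteratedFDeriv_cutoff_le (φ : 𝓢(E, F)) (N k : ℕ) :
    ∃ C : ℝ, 0 ≤ C ∧ ∀ (t : ℝ) (x : E),
      (1 + ‖x‖) ^ N * ‖iteratedFDeriv ℝ k (cutoff t φ) x‖ ≤ C * max 1 |t| ^ k := by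
  obtain ⟨B, hB0, hB⟩ := exists_norm_iteratedFDeriv_comp_const_smul_le (unitBump E) k
  obtain ⟨D, hD0, hD⟩ := exists_one_add_norm_pow_mul_iteratedFDeriv_le φ N k
  refine ⟨∑ i ∈ Finset.range (k + 1), k.choose i * B * D, by positivity, fun t x => ?_⟩
  have hbump : ContDiff ℝ k fun y : E => unitBump E (t • y) :=
    ((unitBump E).smooth k).comp (contDiff_const_smul t)
  have hleibniz := norm_iteratedFDeriv_smul_le hbump (φ.smooth k) x le_rfl
  rw [show ⇑(cutoff t φ) = fun y => unitBump E (t • y) • φ y from funext (cutoff_apply t φ)]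
  calc _ ≤ (1 + ‖x‖) ^ N * ∑ i ∈ Finset.range (k + 1), k.choose i *
          ‖iteratedFDeriv ℝ i (fun y => unitBump E (t • y)) x‖ *
            ‖iteratedFDeriv ℝ (k - i) φ x‖ := by
        gcongr
    _ = ∑ i ∈ Finset.range (k + 1), k.choose i *
          ‖iteratedFDeriv ℝ i (fun y => unitBump E (t • y)) x‖ *
          ((1 + ‖x‖) ^ N * ‖iteratedFDeriv ℝ (k - i) φ x‖) := by
        rw [Finset.mul_sum]
        exact Finset.sum_congr rfl fun i _ => by ring
    _ ≤ ∑ i ∈ Finset.range (k + 1), k.choose i * (B * max 1 |t| ^ k) * D := by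
        gcongr with i hi
        · exact hB i (Finset.mem_range_succ_iff.1 hi) t x
        · exact hD (k - i) (k.sub_le i) x
    _ = (∑ i ∈ Finset.range (k + 1), k.choose i * B * D) * max 1 |t| ^ k := by
        rw [Finset.sum_mul]
        exact Finset.sum_congr rfl fun i _ => by ring

namespace HasPureOrder

variable {A : 𝓢(E, F) →L[ℂ] 𝓢(E, F)} {k : ℕ}

theorem exists_norm_cutoff_le (hA : HasPureOrder A k) (φ : 𝓢(E, F)) (N : ℕ) :
    ∃ C : ℝ, 0 ≤ C ∧ ∀ (t : ℝ) (x : E),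
      (1 + ‖x‖) ^ N * ‖A (cutoff t φ) x‖ ≤ C * max 1 |t| ^ k := by
  obtain ⟨B, hB0, hB⟩ := hA
  obtain ⟨D, hD0, hD⟩ := exists_norm_iteratedFDeriv_cutoff_le φ N k
  refine ⟨B * D, by positivity, fun t x => ?_⟩
  have hB' := hB 0 (cutoff t φ) x
  rw [norm_iteratedFDeriv_zero, zero_add] at hB'
  calc (1 + ‖x‖) ^ N * ‖A (cutoff t φ) x‖
      ≤ (1 + ‖x‖) ^ N * (B * ‖iteratedFDeriv ℝ k (cutoff t φ) x‖) := by gcongr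
    _ = B * ((1 + ‖x‖) ^ N * ‖iteratedFDeriv ℝ k (cutoff t φ) x‖) := by ring
    _ ≤ B * (D * max 1 |t| ^ k) := mul_le_mul_of_nonneg_left (hD t x) hB0
    _ = B * D * max 1 |t| ^ k := by ring

theorem apply_cutoff_of_norm_smul_lt_one (hA : HasPureOrder A k) {t : ℝ} (φ : 𝓢(E, F)) {x : E}
    (hx : ‖t • x‖ < 1) : A (cutoff t φ) x = A φ x := by
  have hcont : Continuous fun y : E => ‖t • y‖ := by fun_prop
  exact hA.apply_eq_of_eventuallyEq <| (hcont.continuousAt.eventually_lt_const hx).mono fun y hy =>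
    cutoff_apply_of_norm_smul_le_one φ hy.le

theorem apply_cutoff_of_two_lt_norm_smul (hA : HasPureOrder A k) {t : ℝ} (φ : 𝓢(E, F)) {x : E}
    (hx : 2 < ‖t • x‖) : A (cutoff t φ) x = 0 := by
  have hcont : Continuous fun y : E => ‖t • y‖ := by fun_prop
  have heq : cutoff t φ =ᶠ[𝓝 x] (0 : 𝓢(E, F)) :=
    (hcont.continuousAt.eventually_const_lt hx).mono fun y hy =>
      cutoff_apply_of_two_le_norm_smul φ hy.le
  rw [hA.apply_eq_of_eventuallyEq heq, map_zero, zero_apply]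

end HasPureOrder

end Cutoff

section WeakSolutions

variable {E F : Type*} [NormedAddCommGroup E] [NormedSpace ℝ E] [NormedAddCommGroup F]

section

variable [NormedSpace ℂ F] {U : Set E} {φ : 𝓢(E, F)}

/-- The space `C₀^∞(U)` of test functions on an open set `U`, as a space of Schwartz functions. -/
def testFunctions (U : Set E) : Submodule ℂ 𝓢(E, F) where
  carrier := {φ | HasCompactSupport φ ∧ tsupport φ ⊆ U}
  zero_mem' := ⟨HasCompactSupport.zero, by simp [tsupport]⟩
  add_mem' hφ hψ := ⟨hφ.1.add hψ.1, (tsupport_add _ _).trans (Set.union_subset hφ.2 hψ.2)⟩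
  smul_mem' c φ hφ :=
    have hsub := Function.support_const_smul_subset c φ
    ⟨hφ.1.mono hsub, (closure_mono hsub).trans hφ.2⟩

theorem mem_testFunctions : φ ∈ testFunctions U ↔ HasCompactSupport φ ∧ tsupport φ ⊆ U := Iff.rfl

theorem mem_testFunctions_compl_zero :
    φ ∈ testFunctions {0}ᶜ ↔ HasCompactSupport φ ∧ (0 : E) ∉ tsupport φ := by
  rw [mem_testFunctions, Set.subset_compl_singleton_iff]

variable [FiniteDimensional ℝ E]

theorem cutoff_mem_testFunctions_univ {t : ℝ} (ht : t ≠ 0) (φ : 𝓢(E, F)) :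
    cutoff t φ ∈ testFunctions Set.univ := by
  refine ⟨HasCompactSupport.intro (isCompact_closedBall 0 (2 / |t|)) fun x hx => ?_,
    Set.subset_univ _⟩
  rw [mem_closedBall_zero_iff, not_le, div_lt_iff₀' (abs_pos.2 ht)] at hx
  exact cutoff_apply_of_two_le_norm_smul φ (by rw [norm_smul]; exact hx.le)

theorem sub_cutoff_mem_testFunctions_compl_zero (hφ : φ ∈ testFunctions Set.univ) (t : ℝ) :
    φ - cutoff t φ ∈ testFunctions {0}ᶜ := by
  refine mem_testFunctions_compl_zero.2 ⟨hφ.1.mono fun x hx hφx => hx ?_, ?_⟩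
  · rw [sub_apply, cutoff_apply, hφx, smul_zero, sub_zero]
  · rw [notMem_tsupport_iff_eventuallyEq]
    have hcont : Continuous fun x : E => ‖t • x‖ := by fun_prop
    filter_upwards [hcont.continuousAt.eventually_lt_const (by simp : ‖t • (0 : E)‖ < 1)] with x hx
    rw [sub_apply, cutoff_apply_of_norm_smul_le_one φ hx.le, sub_self, Pi.zero_apply]

end

variable [InnerProductSpace ℂ F] [MeasurableSpace E] [BorelSpace E] [FiniteDimensional ℝ E]
  {μ : Measure E} [μ.IsAddHaarMeasure] {A : 𝓢(E, F) →L[ℂ] 𝓢(E, F)} {k : ℕ} {u f : Lp F 2 μ}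

/-- `A* u = f` in the weak sense, where `A*` is the formal adjoint of `A`, tested against the
functions in `D`. -/
def IsWeakSolution (A : 𝓢(E, F) →L[ℂ] 𝓢(E, F)) (D : Submodule ℂ 𝓢(E, F)) (u f : Lp F 2 μ) :
    Prop :=
  ∀ φ ∈ D, inner ℂ f (φ.toLp 2 μ) = inner ℂ u ((A φ).toLp 2 μ)

namespace HasPureOrder

theorem tendsto_inner_cutoff_nhdsGT_zero (hA : HasPureOrder A k) (u : Lp F 2 μ) (φ : 𝓢(E, F)) :
    Tendsto (fun t => inner ℂ u ((A (cutoff t φ)).toLp 2 μ)) (𝓝[>] 0)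
      (𝓝 (inner ℂ u ((A φ).toLp 2 μ))) := by
  obtain ⟨N, W, hW⟩ := exists_norm_toLp_two_le_of_weighted_bound (E := E) (F := F) (μ := μ)
  obtain ⟨C, -, hC⟩ := hA.exists_norm_cutoff_le φ N
  have hbound : ∀ᶠ t : ℝ in 𝓝[>] 0,
      ‖(A (cutoff t φ)).toLp 2 μ - (A φ).toLp 2 μ‖ ≤ C * W + ‖(A φ).toLp 2 μ‖ := by
    filter_upwards [Ioc_mem_nhdsGT one_pos] with t ht
    have hmax : max 1 |t| = 1 := max_eq_left (by rw [abs_of_pos ht.1]; exact ht.2)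
    refine (norm_sub_le _ _).trans (add_le_add_left (hW C _ fun x => ?_) _)
    simpa only [hmax, one_pow, mul_one] using hC t x
  have hvanish : ∀ t : ℝ, ∀ᵐ x ∂μ, x ∉ {x : E | 1 ≤ ‖t • x‖} →
      ((A (cutoff t φ)).toLp 2 μ - (A φ).toLp 2 μ : Lp F 2 μ) x = 0 := fun t => by
    filter_upwards [Lp.coeFn_sub ((A (cutoff t φ)).toLp 2 μ) ((A φ).toLp 2 μ),
      (A (cutoff t φ)).coeFn_toLp 2 μ, (A φ).coeFn_toLp 2 μ] with x hsub h₁ h₂ hx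
    rw [hsub, Pi.sub_apply, h₁, h₂, hA.apply_cutoff_of_norm_smul_lt_one φ (not_le.1 hx), sub_self]
  have hescape : ∀ᵐ x ∂μ, ∀ᶠ t : ℝ in 𝓝[>] 0, x ∉ {x : E | 1 ≤ ‖t • x‖} := .of_forall fun x => by
    have hcont : Continuous fun t : ℝ => ‖t • x‖ := by fun_prop
    have hlt := hcont.continuousAt.eventually_lt_const (by simp : ‖(0 : ℝ) • x‖ < 1)
    filter_upwards [nhdsWithin_le_nhds hlt] with t ht using not_le.2 ht
  have hlim := tendsto_inner_zero_of_ae_eventually_notMem (𝕜 := ℂ)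
    (fun t => measurableSet_le measurable_const (by fun_prop)) hescape hvanish hbound u
  simpa only [inner_sub_right, sub_add_cancel, zero_add] using
    hlim.add_const (inner ℂ u ((A φ).toLp 2 μ))

theorem exists_norm_toLp_cutoff_le (hA : HasPureOrder A k) (hk : 2 * k ≤ Module.finrank ℝ E)
    (φ : 𝓢(E, F)) : ∃ M : ℝ, ∀ t : ℝ, 1 ≤ t → ‖(A (cutoff t φ)).toLp 2 μ‖ ≤ M := by
  obtain ⟨C, hC0, hC⟩ := hA.exists_norm_cutoff_le φ 0
  set d := Module.finrank ℝ E
  set V := μ.real (Metric.ball 0 1)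
  refine ⟨C * √(2 ^ d * V), fun t ht => ?_⟩
  have ht0 : 0 < t := one_pos.trans_le ht
  have hsup : ∀ x, ‖A (cutoff t φ) x‖ ≤ C * t ^ k := fun x => by
    simpa [abs_of_pos ht0, max_eq_right ht] using hC t x
  have hsupp : ∀ x ∉ Metric.closedBall 0 (2 / t), A (cutoff t φ) x = 0 := fun x hx => by
    rw [mem_closedBall_zero_iff, not_le, div_lt_iff₀' ht0] at hx
    exact hA.apply_cutoff_of_two_lt_norm_smul φ (by rwa [norm_smul, Real.norm_of_nonneg ht0.le])
  calc ‖(A (cutoff t φ)).toLp 2 μ‖ ≤ C * t ^ k * √(μ.real (Metric.closedBall 0 (2 / t))) :=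
        norm_toLp_two_le_of_support_subset measurableSet_closedBall measure_closedBall_lt_top.ne
          hsup hsupp
    _ = C * √((t ^ k) ^ 2 * ((2 / t) ^ d * V)) := by
        rw [Measure.addHaar_real_closedBall _ _ (by positivity), Real.sqrt_mul (sq_nonneg (t ^ k)),
          Real.sqrt_sq (by positivity), mul_assoc]
    _ = C * √(t ^ (2 * k) / t ^ d * (2 ^ d * V)) := by
        congr 2
        ring
    _ ≤ C * √(1 * (2 ^ d * V)) := by
        gcongr
        exact (div_le_one (by positivity)).2 (pow_le_pow_right₀ ht hk)
    _ = C * √(2 ^ d * V) := by rw [one_mul]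

theorem tendsto_inner_cutoff_atTop [Nontrivial E] (hA : HasPureOrder A k)
    (hk : 2 * k ≤ Module.finrank ℝ E) (u : Lp F 2 μ) (φ : 𝓢(E, F)) :
    Tendsto (fun t => inner ℂ u ((A (cutoff t φ)).toLp 2 μ)) atTop (𝓝 0) := by
  obtain ⟨M, hM⟩ := hA.exists_norm_toLp_cutoff_le (μ := μ) hk φ
  have hvanish : ∀ t : ℝ, ∀ᵐ x ∂μ, x ∉ {x : E | ‖t • x‖ ≤ 2} → (A (cutoff t φ)).toLp 2 μ x = 0 :=
    fun t => by
      filter_upwards [(A (cutoff t φ)).coeFn_toLp 2 μ] with x hx hxs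
      rw [hx, hA.apply_cutoff_of_two_lt_norm_smul φ (not_le.1 hxs)]
  have hescape : ∀ᵐ x ∂μ, ∀ᶠ t : ℝ in atTop, x ∉ {x : E | ‖t • x‖ ≤ 2} := by
    filter_upwards [Measure.ae_ne μ 0] with x hx
    have hlim : Tendsto (fun t : ℝ => ‖t • x‖) atTop atTop := by
      simpa only [norm_smul] using
        tendsto_norm_atTop_atTop.atTop_mul_const (norm_pos_iff.2 hx)
    filter_upwards [hlim.eventually_gt_atTop 2] with t ht using not_le.2 ht
  exact tendsto_inner_zero_of_ae_eventually_notMem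
    (fun t => measurableSet_le (by fun_prop) measurable_const) hescape hvanish
    ((eventually_ge_atTop 1).mono hM) u

end HasPureOrder

namespace IsWeakSolution

theorem univ_of_compl_zero [Nontrivial E] (hA : HasPureOrder A k)
    (hk : 2 * k ≤ Module.finrank ℝ E) (h : IsWeakSolution A (testFunctions {0}ᶜ) u f) :
    IsWeakSolution A (testFunctions Set.univ) u f := by
  intro φ hφ
  have hsub : ∀ t : ℝ, inner ℂ f (φ.toLp 2 μ) - inner ℂ f ((cutoff t φ).toLp 2 μ) =
      inner ℂ u ((A φ).toLp 2 μ) - inner ℂ u ((A (cutoff t φ)).toLp 2 μ) := fun t => by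
    have ht := h _ (sub_cutoff_mem_testFunctions_compl_zero hφ t)
    simpa only [map_sub, ← toLpCLM_apply (𝕜 := ℂ), inner_sub_right] using ht
  have hf := (hasPureOrder_one.tendsto_inner_cutoff_atTop (Nat.zero_le _) f φ).const_sub
    (inner ℂ f (φ.toLp 2 μ))
  have hu := (hA.tendsto_inner_cutoff_atTop hk u φ).const_sub (inner ℂ u ((A φ).toLp 2 μ))
  simp only [one_apply_eq_self, hsub, sub_zero] at hf hu
  exact tendsto_nhds_unique hf hu

theorem top_of_univ (hA : HasPureOrder A k) (h : IsWeakSolution A (testFunctions Set.univ) u f) :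
    IsWeakSolution A ⊤ u f := by
  intro φ _
  have hf := hasPureOrder_one.tendsto_inner_cutoff_nhdsGT_zero f φ
  have hu := hA.tendsto_inner_cutoff_nhdsGT_zero u φ
  simp only [one_apply_eq_self] at hf
  refine tendsto_nhds_unique hf (hu.congr' ?_)
  filter_upwards [self_mem_nhdsWithin] with t ht
  exact (h _ (cutoff_mem_testFunctions_univ (ne_of_gt ht) φ)).symm

theorem top_of_compl_zero [Nontrivial E] (hA : HasPureOrder A k)
    (hk : 2 * k ≤ Module.finrank ℝ E) (h : IsWeakSolution A (testFunctions {0}ᶜ) u f) :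
    IsWeakSolution A ⊤ u f :=
  (h.univ_of_compl_zero hA hk).top_of_univ hA

end IsWeakSolution

theorem dense_toLp_testFunctions_compl_zero [CompleteSpace F] [Nontrivial E] :
    Dense ((testFunctions {0}ᶜ).map (toLpCLM ℂ F 2 μ).toLinearMap : Set (Lp F 2 μ)) := by
  rw [Submodule.dense_iff_topologicalClosure_eq_top, Submodule.topologicalClosure_eq_top_iff,
    Submodule.eq_bot_iff]
  intro f hf
  have hweak : IsWeakSolution (1 : 𝓢(E, F) →L[ℂ] 𝓢(E, F)) (testFunctions {0}ᶜ) (0 : Lp F 2 μ) f :=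
    fun φ hφ => by
      rw [inner_zero_left]
      exact Submodule.inner_left_of_mem_orthogonal (Submodule.mem_map_of_mem hφ) hf
  refine (denseRange_toLpCLM (F := F) (μ := μ) (p := 2) ENNReal.ofNat_ne_top).eq_zero_of_inner_left
    (𝕜 := ℂ) fun φ => ?_
  simpa using hweak.top_of_compl_zero hasPureOrder_one (Nat.zero_le _) φ trivial

end WeakSolutions

section Symbols

variable {E : Type*} [NormedAddCommGroup E] [InnerProductSpace ℝ E] [FiniteDimensional ℝ E]
  [MeasurableSpace E] [BorelSpace E] {A B : 𝓢(E, ℂ) →L[ℂ] 𝓢(E, ℂ)} {σ τ : E → ℝ}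

/-- `A` is the Fourier multiplier with real symbol `σ`. -/
def HasSymbol (A : 𝓢(E, ℂ) →L[ℂ] 𝓢(E, ℂ)) (σ : E → ℝ) : Prop :=
  ∀ φ ξ, 𝓕 (A φ) ξ = (σ ξ : ℂ) * 𝓕 φ ξ

omit [MeasurableSpace E] [BorelSpace E] in
theorem exists_schwartzMap_apply_ne_zero (x : E) : ∃ φ : 𝓢(E, ℂ), φ x ≠ 0 := by
  let b : ContDiffBump x := default
  have hsmooth : ContDiff ℝ (⊤ : ℕ∞) fun y => (b y : ℂ) :=
    Complex.ofRealCLM.contDiff.comp b.contDiff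
  refine ⟨(b.hasCompactSupport.comp_left Complex.ofReal_zero).toSchwartzMap hsmooth, ?_⟩
  exact Complex.ofReal_ne_zero.2 (b.pos_of_mem_ball (Metric.mem_ball_self b.rOut_pos)).ne'

namespace HasSymbol

theorem mul (hA : HasSymbol A σ) (hB : HasSymbol B τ) : HasSymbol (A * B) (σ * τ) := fun φ ξ => by
  rw [mul_apply_eq_comp, hA, hB, Pi.mul_apply, Complex.ofReal_mul, mul_assoc]

theorem pow (hA : HasSymbol A σ) (m : ℕ) : HasSymbol (A ^ m) (σ ^ m) := by
  induction m with
  | zero => exact fun φ ξ => by simp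
  | succ m ih => exact ih.mul hA

theorem continuous (hA : HasSymbol A σ) : Continuous σ := by
  refine continuous_iff_continuousAt.2 fun ξ => ?_
  obtain ⟨ψ, hψ⟩ := exists_schwartzMap_apply_ne_zero ξ
  have hquot : ContinuousAt (fun η => (𝓕 (A (𝓕⁻ ψ)) η / ψ η).re) ξ :=
    Complex.continuous_re.continuousAt.comp
      ((SchwartzMap.continuous _).continuousAt.div ψ.continuous.continuousAt hψ)
  refine hquot.congr ?_
  filter_upwards [ψ.continuous.continuousAt.eventually_ne hψ] with η hη
  rw [hA, FourierTransform.fourier_fourierInv_eq, mul_div_cancel_right₀ _ hη, Complex.ofReal_re]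

theorem inner_toLp_comm (hA : HasSymbol A σ) (φ ψ : 𝓢(E, ℂ)) :
    inner ℂ ((A φ).toLp 2) (ψ.toLp 2) = inner ℂ (φ.toLp 2) ((A ψ).toLp 2) := by
  rw [← inner_fourier_toL2_eq, ← inner_fourier_toL2_eq φ, inner_toL2_toL2_eq _ _ volume,
    inner_toL2_toL2_eq _ _ volume]
  congr 1 with ξ
  rw [hA, hA, RCLike.inner_apply, RCLike.inner_apply, map_mul, Complex.conj_ofReal]
  ring

end HasSymbol

theorem inner_toLp_eq_integral (u : Lp ℂ 2 (volume : Measure E)) (φ : 𝓢(E, ℂ)) :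
    inner ℂ u (φ.toLp 2) = ∫ x, starRingEnd ℂ (u x) * φ x := by
  rw [L2.inner_def]
  refine integral_congr_ae ?_
  filter_upwards [φ.coeFn_toLp 2 volume] with x hx
  rw [hx, RCLike.inner_apply, mul_comm]

theorem inner_toLp_eq_integral_fourier (u : Lp ℂ 2 (volume : Measure E)) (φ : 𝓢(E, ℂ)) :
    inner ℂ u (φ.toLp 2) = ∫ ξ, starRingEnd ℂ (𝓕 u ξ) * 𝓕 φ ξ := by
  rw [← MeasureTheory.Lp.inner_fourier_eq, toLp_fourier_eq, inner_toLp_eq_integral]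

variable {u f v g : Lp ℂ 2 (volume : Measure E)}

theorem IsWeakSolution.fourier_ae_eq (hA : HasSymbol A σ) (h : IsWeakSolution A ⊤ u f) :
    ((𝓕 f : Lp ℂ 2 (volume : Measure E)) : E → ℂ) =ᵐ[volume] fun ξ =>
      (σ ξ : ℂ) * (𝓕 u : Lp ℂ 2 (volume : Measure E)) ξ := by
  have hloc : ∀ w : Lp ℂ 2 (volume : Measure E), LocallyIntegrable w volume := fun w =>
    (Lp.memLp w).locallyIntegrable one_le_two
  have hσ : Continuous fun ξ => (σ ξ : ℂ) := Complex.continuous_ofReal.comp hA.continuous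
  refine ae_eq_of_integral_contDiff_smul_eq (hloc _) ?_ fun G hG hGc => ?_
  · rw [← locallyIntegrableOn_univ]
    exact (locallyIntegrableOn_univ.2 (hloc (𝓕 u))).continuousOn_mul hσ.continuousOn
      isOpen_univ.isLocallyClosed
  set ψ : 𝓢(E, ℂ) := (hGc.comp_left Complex.ofReal_zero).toSchwartzMap
    (Complex.ofRealCLM.contDiff.comp hG)
  have hψ : ∀ ξ, ψ ξ = (G ξ : ℂ) := fun ξ => rfl
  have htest := h (𝓕⁻ ψ) trivial
  simp only [inner_toLp_eq_integral_fourier, hA (𝓕⁻ ψ) _,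
    FourierTransform.fourier_fourierInv_eq, hψ] at htest
  have hconj := congrArg (starRingEnd ℂ) htest
  rw [← integral_conj, ← integral_conj] at hconj
  simpa [mul_comm, mul_left_comm, mul_assoc] using hconj

theorem IsWeakSolution.inner_comm (hA : HasSymbol A σ) (hu : IsWeakSolution A ⊤ u f)
    (hv : IsWeakSolution A ⊤ v g) : inner ℂ f v = inner ℂ u g := by
  rw [← MeasureTheory.Lp.inner_fourier_eq f v, ← MeasureTheory.Lp.inner_fourier_eq u g,
    L2.inner_def, L2.inner_def]
  refine integral_congr_ae ?_
  filter_upwards [hu.fourier_ae_eq hA, hv.fourier_ae_eq hA] with ξ hf hg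
  rw [hf, hg, RCLike.inner_apply, RCLike.inner_apply, map_mul, Complex.conj_ofReal]
  ring

theorem memLp_two_inv_sub_I {c : ℝ} {k : ℕ} (hσ : Continuous σ) (hc : 0 < c)
    (hell : ∀ ξ, c * ‖ξ‖ ^ k ≤ |σ ξ|) (hk : Module.finrank ℝ E < 2 * k) :
    MemLp (fun ξ => ((σ ξ : ℂ) - Complex.I)⁻¹) 2 (volume : Measure E) := by
  have hone : ∀ ξ, 1 ≤ ‖(σ ξ : ℂ) - Complex.I‖ := fun ξ => by
    simpa using Complex.abs_im_le_norm ((σ ξ : ℂ) - Complex.I)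
  have habs : ∀ ξ, |σ ξ| ≤ ‖(σ ξ : ℂ) - Complex.I‖ := fun ξ => by
    simpa using Complex.abs_re_le_norm ((σ ξ : ℂ) - Complex.I)
  have hpos : ∀ ξ, 0 < ‖(σ ξ : ℂ) - Complex.I‖ := fun ξ => one_pos.trans_le (hone ξ)
  have hgrowth : ∀ ξ, (1 + ‖ξ‖) ^ k ≤ 2 ^ (k - 1) * (1 + c⁻¹) * ‖(σ ξ : ℂ) - Complex.I‖ := fun ξ =>
    calc (1 + ‖ξ‖) ^ k ≤ 2 ^ (k - 1) * (1 ^ k + ‖ξ‖ ^ k) :=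
          add_pow_le zero_le_one (norm_nonneg ξ) k
      _ ≤ 2 ^ (k - 1) * (‖(σ ξ : ℂ) - Complex.I‖ + c⁻¹ * ‖(σ ξ : ℂ) - Complex.I‖) := by
          gcongr
          · rw [one_pow]
            exact hone ξ
          · rw [le_inv_mul_iff₀ hc]
            exact (hell ξ).trans (habs ξ)
      _ = 2 ^ (k - 1) * (1 + c⁻¹) * ‖(σ ξ : ℂ) - Complex.I‖ := by ring
  have hcont : Continuous fun ξ => ((σ ξ : ℂ) - Complex.I)⁻¹ :=
    ((Complex.continuous_ofReal.comp hσ).sub continuous_const).inv₀ fun ξ => norm_pos_iff.1 (hpos ξ)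
  refine (memLp_two_inv_one_add_norm_pow hk).of_le_mul (c := 2 ^ (k - 1) * (1 + c⁻¹))
    hcont.aestronglyMeasurable (.of_forall fun ξ => ?_)
  rw [norm_inv, Real.norm_of_nonneg (by positivity), ← div_eq_mul_inv, inv_le_comm₀ (hpos ξ)
    (by positivity), inv_div, div_le_iff₀' (by positivity)]
  exact hgrowth ξ

theorem HasSymbol.exists_inner_eq_apply_zero_sub (hA : HasSymbol A σ)
    (hσ : MemLp (fun ξ => ((σ ξ : ℂ) - Complex.I)⁻¹) 2 (volume : Measure E)) :
    ∃ u : Lp ℂ 2 (volume : Measure E), ∀ φ : 𝓢(E, ℂ),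
      inner ℂ u ((A φ).toLp 2) = φ 0 - Complex.I * inner ℂ u (φ.toLp 2) := by
  refine ⟨𝓕⁻ hσ.toLp, fun φ => ?_⟩
  have hpair : ∀ ψ : 𝓢(E, ℂ), inner ℂ (𝓕⁻ hσ.toLp : Lp ℂ 2 (volume : Measure E)) (ψ.toLp 2) =
      ∫ ξ, ((σ ξ : ℂ) + Complex.I)⁻¹ * 𝓕 ψ ξ := fun ψ => by
    rw [inner_toLp_eq_integral_fourier, FourierTransform.fourier_fourierInv_eq]
    refine integral_congr_ae ?_
    filter_upwards [hσ.coeFn_toLp] with ξ hξ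
    simp [hξ]
  have hint : Integrable fun ξ => ((σ ξ : ℂ) + Complex.I)⁻¹ * 𝓕 φ ξ := by
    refine (hσ.star.integrable_mul ((𝓕 φ).memLp 2 volume)).congr (.of_forall fun ξ => by simp)
  have hinv : φ 0 = ∫ ξ, 𝓕 φ ξ := by
    have h : 𝓕⁻ (𝓕 φ) = φ := FourierTransform.fourierInv_fourier_eq φ
    conv_lhs => rw [← h, fourierInv_coe, Real.fourierInv_eq]
    simp
  rw [hpair, hpair, hinv, ← integral_const_mul, ← integral_sub (𝓕 φ).integrable
    (hint.const_mul Complex.I)]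
  congr 1 with ξ
  have hne : (σ ξ : ℂ) + Complex.I ≠ 0 := fun h => by simpa using congrArg Complex.im h
  rw [hA]
  field_simp
  ring

theorem HasSymbol.exists_isWeakSolution_I_smul (hA : HasSymbol A σ)
    (hσ : MemLp (fun ξ => ((σ ξ : ℂ) - Complex.I)⁻¹) 2 (volume : Measure E)) :
    ∃ u : Lp ℂ 2 (volume : Measure E),
      u ≠ 0 ∧ IsWeakSolution A (testFunctions {0}ᶜ) u (Complex.I • u) := by
  obtain ⟨u, hu⟩ := hA.exists_inner_eq_apply_zero_sub hσ
  refine ⟨u, fun hu0 => ?_, fun φ hφ => ?_⟩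
  · obtain ⟨φ, hφ⟩ := exists_schwartzMap_apply_ne_zero (0 : E)
    exact hφ (by simpa [hu0, eq_comm] using hu φ)
  · rw [hu, image_eq_zero_of_notMem_tsupport (mem_testFunctions_compl_zero.1 hφ).2,
      inner_smul_left, Complex.conj_I]
    ring

end Symbols

section OpOn

variable {n : ℕ} {A : 𝓢(EuclideanSpace ℝ (Fin n), ℂ) →L[ℂ] 𝓢(EuclideanSpace ℝ (Fin n), ℂ)}
  {L : (EuclideanSpace ℝ (Fin n) → ℂ) → EuclideanSpace ℝ (Fin n) → ℂ}
  {σ : EuclideanSpace ℝ (Fin n) → ℝ}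
  {u f : Lp ℂ 2 (volume : Measure (EuclideanSpace ℝ (Fin n)))}

theorem graphOf_eq_map (hL : ∀ φ, ⇑(A φ) = L φ) : graphOf n L = (testFunctions {0}ᶜ).map
    ((toLpCLM ℂ ℂ 2 volume).prod (toLpCLM ℂ ℂ 2 volume ∘L A)).toLinearMap := by
  rw [graphOf, ← Submodule.span_eq (Submodule.map _ _)]
  congr 1
  ext p
  constructor
  · rintro ⟨φ, hsmooth, hc, h0, hu, hf⟩
    let ψ : 𝓢(EuclideanSpace ℝ (Fin n), ℂ) := hc.toSchwartzMap hsmooth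
    have hA : (A ψ).toLp 2 =ᵐ[volume] L φ := hL ψ ▸ (A ψ).coeFn_toLp 2 volume
    exact ⟨ψ, mem_testFunctions_compl_zero.2 ⟨hc, h0⟩,
      Prod.ext (Lp.ext ((ψ.coeFn_toLp 2 volume).trans hu.symm)) (Lp.ext (hA.trans hf.symm))⟩
  · rintro ⟨φ, hφ, rfl⟩
    obtain ⟨hc, h0⟩ := mem_testFunctions_compl_zero.1 hφ
    exact ⟨φ, φ.smooth ⊤, hc, h0, φ.coeFn_toLp 2 volume, hL φ ▸ (A φ).coeFn_toLp 2 volume⟩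

theorem mem_graph_opOn_iff (hL : ∀ φ, ⇑(A φ) = L φ) :
    (u, f) ∈ (opOn n L).graph ↔
      ∃ φ ∈ testFunctions {0}ᶜ, φ.toLp 2 = u ∧ (A φ).toLp 2 = f := by
  have hgraph : (opOn n L).graph = graphOf n L := by
    refine Submodule.toLinearPMap_graph_eq _ fun p hp hp0 => ?_
    rw [graphOf_eq_map hL] at hp
    obtain ⟨φ, -, rfl⟩ := hp
    have hφ : φ = 0 := injective_toLp 2 volume (hp0.trans (toLpCLM ℂ ℂ 2 volume).map_zero.symm)
    rw [hφ, map_zero, Prod.snd_zero]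
  rw [hgraph, graphOf_eq_map hL]
  simp [Submodule.mem_map, Prod.ext_iff]

theorem dense_domain_opOn (hn : n ≠ 0) (hL : ∀ φ, ⇑(A φ) = L φ) :
    Dense ((opOn n L).domain : Set (Lp ℂ 2 (volume : Measure (EuclideanSpace ℝ (Fin n))))) := by
  have : NeZero n := ⟨hn⟩
  refine dense_toLp_testFunctions_compl_zero.mono ?_
  rintro _ ⟨φ, hφ, rfl⟩
  exact LinearPMap.mem_domain_iff.2 ⟨_, (mem_graph_opOn_iff hL).2 ⟨φ, hφ, rfl, rfl⟩⟩

theorem mem_graph_adjoint_opOn_iff (hn : n ≠ 0) (hL : ∀ φ, ⇑(A φ) = L φ) :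
    (u, f) ∈ (opOn n L).adjoint.graph ↔ IsWeakSolution A (testFunctions {0}ᶜ) u f := by
  rw [LinearPMap.adjoint_graph_eq_graph_adjoint (dense_domain_opOn hn hL),
    Submodule.mem_adjoint_iff]
  constructor
  · intro h φ hφ
    have hφ' := h _ _ ((mem_graph_opOn_iff hL).2 ⟨φ, hφ, rfl, rfl⟩)
    rw [← inner_conj_symm, ← inner_conj_symm u]
    exact congrArg _ (sub_eq_zero.1 hφ').symm
  · intro h a b hab
    obtain ⟨φ, hφ, rfl, rfl⟩ := (mem_graph_opOn_iff hL).1 hab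
    rw [sub_eq_zero, ← inner_conj_symm, ← h φ hφ, inner_conj_symm]

theorem isFormalAdjoint_opOn (hL : ∀ φ, ⇑(A φ) = L φ) (hσ : HasSymbol A σ) :
    (opOn n L).IsFormalAdjoint (opOn n L) := by
  refine isFormalAdjoint_iff_forall_mem_graph.2 fun u f v g hu hv => ?_
  obtain ⟨φ, -, rfl, rfl⟩ := (mem_graph_opOn_iff hL).1 hu
  obtain ⟨ψ, -, rfl, rfl⟩ := (mem_graph_opOn_iff hL).1 hv
  exact hσ.inner_toLp_comm φ ψ

theorem essentiallySelfAdjoint_opOn_iff (hn : n ≠ 0) (hL : ∀ φ, ⇑(A φ) = L φ)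
    (hσ : HasSymbol A σ) :
    EssentiallySelfAdjoint (opOn n L) ↔
      ∀ u f v g : Lp ℂ 2 (volume : Measure (EuclideanSpace ℝ (Fin n))),
        IsWeakSolution A (testFunctions {0}ᶜ) u f → IsWeakSolution A (testFunctions {0}ᶜ) v g →
          inner ℂ f v = inner ℂ u g := by
  have hdense := dense_domain_opOn hn hL
  simp only [← mem_graph_adjoint_opOn_iff hn hL, ← isFormalAdjoint_iff_forall_mem_graph]
  rw [← isSelfAdjoint_adjoint_iff_isFormalAdjoint hdense (isFormalAdjoint_opOn hL hσ),
    EssentiallySelfAdjoint, and_iff_right hdense]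

theorem stmt15_general {k : ℕ} (hn : n ≠ 0) (hL : ∀ φ, ⇑(A φ) = L φ) (hA : HasPureOrder A k)
    (hσ : HasSymbol A σ) {c : ℝ} (hc : 0 < c) (hell : ∀ ξ, c * ‖ξ‖ ^ k ≤ |σ ξ|) :
    EssentiallySelfAdjoint (opOn n L) ↔ 2 * k ≤ n := by
  have : NeZero n := ⟨hn⟩
  have hdim : Module.finrank ℝ (EuclideanSpace ℝ (Fin n)) = n := finrank_euclideanSpace_fin
  rw [essentiallySelfAdjoint_opOn_iff hn hL hσ]
  refine ⟨fun hsymm => ?_, fun hk u f v g hu hv => ?_⟩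
  swap
  · have hk' := hk.trans_eq hdim.symm
    exact (hu.top_of_compl_zero hA hk').inner_comm hσ (hv.top_of_compl_zero hA hk')
  by_contra! hk
  obtain ⟨u, hu0, hu⟩ :=
    hσ.exists_isWeakSolution_I_smul (memLp_two_inv_sub_I hσ.continuous hc hell (by rwa [hdim]))
  have hI : -(Complex.I * inner ℂ u u) = Complex.I * inner ℂ u u := by
    simpa only [inner_smul_left, inner_smul_right, Complex.conj_I, neg_mul] using
      hsymm u _ u _ hu hu
  exact hu0 (by simpa [neg_eq_self] using hI)

end OpOn

section NegLaplacian

variable {E : Type*} [NormedAddCommGroup E] [InnerProductSpace ℝ E] [FiniteDimensional ℝ E]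

variable (E) in
/-- The negative Laplacian as a continuous linear operator on Schwartz functions. -/
def schwartzNegLap : 𝓢(E, ℂ) →L[ℂ] 𝓢(E, ℂ) :=
  -LineDeriv.laplacianCLM ℂ E 𝓢(E, ℂ)

theorem schwartzNegLap_apply (φ : 𝓢(E, ℂ)) : schwartzNegLap E φ = -Laplacian.laplacian φ := by
  rw [schwartzNegLap, neg_apply, SchwartzMap.laplacianCLM_eq]

theorem hasPureOrder_schwartzNegLap : HasPureOrder (schwartzNegLap E) 2 :=
  (HasPureOrder.sum fun _ _ =>
    (hasPureOrder_lineDerivOpCLM _).mul (hasPureOrder_lineDerivOpCLM _)).neg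

theorem hasSymbol_schwartzNegLap [MeasurableSpace E] [BorelSpace E] :
    HasSymbol (schwartzNegLap E) fun ξ => (2 * Real.pi) ^ 2 * ‖ξ‖ ^ 2 := fun φ ξ => by
  have hgrowth : (fun x : E => ‖x‖ ^ 2).HasTemperateGrowth := by fun_prop
  rw [schwartzNegLap_apply, laplacian_eq_fourierMultiplierCLM, neg_smul, neg_neg,
    fourierMultiplierCLM_apply, FourierTransform.fourier_smul,
    FourierTransform.fourier_fourierInv_eq, _root_.smul_apply, smulLeftCLM_apply_apply hgrowth]
  simp [mul_assoc]

theorem coe_schwartzNegLap {n : ℕ} (φ : 𝓢(EuclideanSpace ℝ (Fin n), ℂ)) :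
    ⇑(schwartzNegLap _ φ) = negLap φ := by
  ext x
  simp only [schwartzNegLap_apply, negLap, laplacian,
    SchwartzMap.laplacian_eq_sum (EuclideanSpace.basisFun (Fin n) ℝ),
    EuclideanSpace.basisFun_apply, neg_apply, sum_apply]
  rfl

theorem coe_schwartzNegLap_pow {n : ℕ} (m : ℕ) (φ : 𝓢(EuclideanSpace ℝ (Fin n), ℂ)) :
    ⇑((schwartzNegLap _ ^ m) φ) = negLap^[m] φ := by
  induction m generalizing φ with
  | zero => rfl
  | succ m ih =>
    rw [pow_succ, mul_apply_eq_comp, ih, coe_schwartzNegLap, Function.iterate_succ_apply]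

end NegLaplacian

theorem pow_two_mul_le_two_pi_sq_mul_sq_pow (r : ℝ) (m : ℕ) :
    r ^ (2 * m) ≤ ((2 * Real.pi) ^ 2 * r ^ 2) ^ m := by
  have hpi : 1 ≤ (2 * Real.pi) ^ 2 := one_le_pow₀ (by linarith [Real.pi_gt_three])
  rw [pow_mul]
  gcongr
  exact le_mul_of_one_le_left (sq_nonneg r) hpi

theorem stmt15 (m n : ℕ) (hm : 1 ≤ m) (hn : 2 ≤ n) :
    EssentiallySelfAdjoint (negLapPowOp m n) ↔ 4 * m ≤ n := by
  rw [show 4 * m = 2 * (2 * m) by ring]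
  exact stmt15_general (by lia) (coe_schwartzNegLap_pow m) (hasPureOrder_schwartzNegLap.pow m)
    (hasSymbol_schwartzNegLap.pow m) one_pos fun ξ =>
      (one_mul _).trans_le ((pow_two_mul_le_two_pi_sq_mul_sq_pow ‖ξ‖ m).trans (le_abs_self _))
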